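/- Let d ≥ 1 be an integer and n ≥ 0 be an integer. A nonempty subset Γ of ℕ_0^d is a contractive projection set for H^{2(n+1)}(𝕋^d) if and only if E_n(Γ) = Γ. -/

import Mathlib

open MeasureTheory
open scoped Classical ENNReal

noncomputable section

/-- The `d`-dimensional torus, modelled as `d` copies of `ℝ/ℤ`,
whose product `volume` measure is the normalized Haar measure. -/
abbrev Torus (d : ℕ) := Fin d → AddCircle (1 : ℝ)

/-- The character `z ↦ z^α` on the torus. -/
def torusChar {d : ℕ} (α : Fin d → ℤ) (x : Torus d) : ℂ :=
  ∏ j, fourier (α j) (x j)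

/-- The trigonometric polynomial with frequencies in `F` and coefficients `a`. -/
def trigPoly {d : ℕ} (F : Finset (Fin d → ℤ)) (a : (Fin d → ℤ) → ℂ) (x : Torus d) : ℂ :=
  ∑ α ∈ F, a α * torusChar α x

/-- The set `ℕ₀^d` of multi-indices with nonnegative entries. -/
def NN (d : ℕ) : Set (Fin d → ℤ) := {α | ∀ j, 0 ≤ α j}

/-- `Λ` is a coset in `ℤ^d`, i.e. a translate of a subgroup. -/
def IsCoset {d : ℕ} (Λ : Set (Fin d → ℤ)) : Prop :=
  ∃ (x : Fin d → ℤ) (H : AddSubgroup (Fin d → ℤ)),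
    Λ = (x + ·) '' (H : Set (Fin d → ℤ))

/-- `Λ` is a contractive projection set for `L^p(𝕋^d)`:
the projection onto frequencies in `Λ` is contractive on trigonometric polynomials. -/
def IsContractiveLp (d : ℕ) (p : ℝ≥0∞) (Λ : Set (Fin d → ℤ)) : Prop :=
  ∀ (F : Finset (Fin d → ℤ)) (a : (Fin d → ℤ) → ℂ),
    eLpNorm (trigPoly (F.filter (· ∈ Λ)) a) p volume ≤ eLpNorm (trigPoly F a) p volume

/-- `Γ` is a contractive projection set for `H^p(𝕋^d)`:
the projection onto frequencies in `Γ` is contractive on analytic polynomials. -/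
def IsContractiveHp (d : ℕ) (p : ℝ≥0∞) (Γ : Set (Fin d → ℤ)) : Prop :=
  ∀ F : Finset (Fin d → ℤ), ↑F ⊆ NN d → ∀ a : (Fin d → ℤ) → ℂ,
    eLpNorm (trigPoly (F.filter (· ∈ Γ)) a) p volume ≤ eLpNorm (trigPoly F a) p volume

/-- `Γ` has dimension `k`: the subgroup generated by the differences `γ - γ₀` has rank `k`. -/
def HasDim {d : ℕ} (Γ : Set (Fin d → ℤ)) (k : ℕ) : Prop :=
  ∀ γ₀ ∈ Γ, Module.finrank ℤ (Submodule.span ℤ ((· - γ₀) '' Γ)) = k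

/-- `H^p(𝕋^d)` enjoys the contractive restriction property of dimension `k`:
every `k`-dimensional contractive projection set for `H^p(𝕋^d)` is the restriction
of a coset in `ℤ^d` to `ℕ₀^d`. -/
def ContractiveRestrictionProperty (d : ℕ) (p : ℝ≥0∞) (k : ℕ) : Prop :=
  ∀ Γ : Set (Fin d → ℤ), Γ.Nonempty → Γ ⊆ NN d → HasDim Γ k → IsContractiveHp d p Γ →
    ∃ Λ : Set (Fin d → ℤ), IsCoset Λ ∧ Γ = Λ ∩ NN d

/-- The coset `Λ(Γ)` in `ℤ^d` generated by `Γ`. -/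
def cosetGen {d : ℕ} (Γ : Set (Fin d → ℤ)) : Set (Fin d → ℤ) :=
  ⋃ γ₀ ∈ Γ, (γ₀ + ·) '' (AddSubgroup.closure ((· - γ₀) '' Γ) : Set (Fin d → ℤ))

/-- The `n`-extension `E_n(Γ)`: all points of `Λ(Γ) ∩ ℕ₀^d` at distance at most `n` from `Γ`. -/
def Eext {d : ℕ} (n : ℕ) (Γ : Set (Fin d → ℤ)) : Set (Fin d → ℤ) :=
  {lam | lam ∈ cosetGen Γ ∩ NN d ∧ ∃ γ ∈ Γ, ∃ m : (Fin d → ℤ) →₀ ℤ,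
    (↑m.support : Set (Fin d → ℤ)) ⊆ Γ \ {γ} ∧
    lam = γ + ∑ α ∈ m.support, m α • (α - γ) ∧
    (∑ α ∈ m.support, max (m α) 0) ≤ (n : ℤ) ∧
    (∑ α ∈ m.support, max (-(m α)) 0) ≤ (n : ℤ)}

/-- Iterated `n`-extensions `E_n^k(Γ)`. -/
def EextIter {d : ℕ} (n : ℕ) : ℕ → Set (Fin d → ℤ) → Set (Fin d → ℤ)
  | 0, Γ => Eext n Γ
  | (k + 1), Γ => Eext n (EextIter n k Γ)

/-- The `n`-completion `E_n^∞(Γ)`. -/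
def EextInf {d : ℕ} (n : ℕ) (Γ : Set (Fin d → ℤ)) : Set (Fin d → ℤ) :=
  ⋃ k, EextIter n k Γ

/-! ### Combinatorics -/

lemma exists_fin_sum {d : ℕ} (Γ : Set (Fin d → ℤ)) (γ : Fin d → ℤ) (hγ : γ ∈ Γ)
    (T : Finset (Fin d → ℤ)) (hT : (↑T : Set (Fin d → ℤ)) ⊆ Γ) (c : (Fin d → ℤ) → ℕ) (N : ℕ)
    (hc : ∑ α ∈ T, c α ≤ N) :
    ∃ p : Fin N → (Fin d → ℤ), (∀ i, p i ∈ Γ) ∧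
      ∑ i, p i = N • γ + ∑ α ∈ T, c α • (α - γ) := by
  let s : Multiset (Fin d → ℤ) :=
    ∑ α ∈ T, Multiset.replicate (c α) α + Multiset.replicate (N - ∑ α ∈ T, c α) γ
  have hcard : s.card = N := by
    simp only [s, Multiset.card_add, Multiset.card_sum, Multiset.card_replicate]
    omega
  have hmem : ∀ x ∈ s, x ∈ Γ := by
    intro x hx
    simp only [s, Multiset.mem_add, Multiset.mem_sum] at hx
    rcases hx with ⟨α, hα, hx⟩ | hx
    · rw [Multiset.eq_of_mem_replicate hx]; exact hT hα
    · rw [Multiset.eq_of_mem_replicate hx]; exact hγ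
  have hsum : s.sum = N • γ + ∑ α ∈ T, c α • (α - γ) := by
    have h1 : s.sum = ∑ α ∈ T, c α • α + (N - ∑ α ∈ T, c α) • γ := by
      simp [s, Multiset.sum_sum]
    have h2 : (N - ∑ α ∈ T, c α) • γ + ∑ α ∈ T, c α • γ = N • γ := by
      rw [← Finset.sum_smul, ← add_smul, Nat.sub_add_cancel hc]
    rw [h1, ← h2]
    simp only [smul_sub, Finset.sum_sub_distrib]
    abel
  obtain ⟨l, hlen, hl1, hl2⟩ : ∃ l : List (Fin d → ℤ), l.length = N ∧ (∀ x ∈ l, x ∈ Γ) ∧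
      l.sum = N • γ + ∑ α ∈ T, c α • (α - γ) :=
    ⟨s.toList, by rw [Multiset.length_toList, hcard],
      fun x hx => hmem x (Multiset.mem_toList.1 hx), by rw [Multiset.sum_toList, hsum]⟩
  clear hcard hmem hsum s
  subst hlen
  refine ⟨l.get, fun i => hl1 _ (List.get_mem _ _), ?_⟩
  rw [← hl2, ← List.sum_ofFn, List.ofFn_get]

lemma exists_of_mem_Eext {d n : ℕ} {Γ : Set (Fin d → ℤ)} {lam : Fin d → ℤ}
    (h : lam ∈ Eext n Γ) :
    ∃ (p : Fin (n + 1) → (Fin d → ℤ)) (q : Fin n → (Fin d → ℤ)),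
      (∀ i, p i ∈ Γ) ∧ (∀ i, q i ∈ Γ) ∧ ∑ i, p i - ∑ i, q i = lam := by
  obtain ⟨-, γ, hγ, m, hm, hl, h1, h2⟩ := h
  have hs : (↑m.support : Set (Fin d → ℤ)) ⊆ Γ := fun x hx => (hm hx).1
  have e1 : ∑ α ∈ m.support, (m α).toNat ≤ n + 1 := by
    zify
    simp only [Int.ofNat_toNat]
    omega
  have e2 : ∑ α ∈ m.support, (-(m α)).toNat ≤ n := by
    zify
    simpa only [Int.ofNat_toNat] using h2
  obtain ⟨p, hp, hps⟩ := exists_fin_sum Γ γ hγ m.support hs (fun α => (m α).toNat) (n + 1) e1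
  obtain ⟨q, hq, hqs⟩ := exists_fin_sum Γ γ hγ m.support hs (fun α => (-(m α)).toNat) n e2
  refine ⟨p, q, hp, hq, ?_⟩
  rw [hps, hqs, hl]
  have : ∑ α ∈ m.support, m α • (α - γ) =
      ∑ α ∈ m.support, (m α).toNat • (α - γ) - ∑ α ∈ m.support, (-(m α)).toNat • (α - γ) := by
    rw [← Finset.sum_sub_distrib]
    refine Finset.sum_congr rfl fun α _ => ?_
    rw [← natCast_zsmul, ← natCast_zsmul, ← sub_smul, Int.toNat_sub_toNat_neg]
  rw [this, succ_nsmul]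
  abel

lemma sum_ite_le {d n : ℕ} (q : Fin n → (Fin d → ℤ)) (s : Finset (Fin d → ℤ)) :
    ∑ α ∈ s, (∑ i, Finsupp.single (q i) (1 : ℤ)) α ≤ n := by
  simp only [Finsupp.finsetSum_apply, Finsupp.single_apply]
  rw [Finset.sum_comm]
  calc _ ≤ ∑ i : Fin n, (1 : ℤ) := by
        refine Finset.sum_le_sum fun i _ => ?_
        rw [Finset.sum_ite_eq]
        split_ifs <;> simp
    _ = n := by simp

lemma sum_single_nonneg {d n : ℕ} (q : Fin n → (Fin d → ℤ)) (α : Fin d → ℤ) :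
    0 ≤ (∑ i, Finsupp.single (q i) (1 : ℤ)) α := by
  simp only [Finsupp.finsetSum_apply, Finsupp.single_apply]
  exact Finset.sum_nonneg fun i _ => by split_ifs <;> simp

lemma sum_single_mem {d n : ℕ} (q : Fin n → (Fin d → ℤ)) {Γ : Set (Fin d → ℤ)}
    (hq : ∀ i, q i ∈ Γ) (α : Fin d → ℤ)
    (h : (∑ i, Finsupp.single (q i) (1 : ℤ)) α ≠ 0) : α ∈ Γ := by
  simp only [Finsupp.finsetSum_apply, Finsupp.single_apply] at h
  obtain ⟨i, -, hi⟩ := Finset.exists_ne_zero_of_sum_ne_zero h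
  have : q i = α := by
    by_contra hne
    simp [hne] at hi
  exact this ▸ hq i

lemma mem_Eext_of_sum {d n : ℕ} {Γ : Set (Fin d → ℤ)} {lam : Fin d → ℤ}
    (p : Fin (n + 1) → (Fin d → ℤ)) (q : Fin n → (Fin d → ℤ))
    (hp : ∀ i, p i ∈ Γ) (hq : ∀ i, q i ∈ Γ) (hl : ∑ i, p i - ∑ i, q i = lam)
    (hNN : lam ∈ NN d) : lam ∈ Eext n Γ := by
  have hlam : lam = p 0 + (∑ i : Fin n, (p i.succ - p 0) - ∑ i, (q i - p 0)) := by
    rw [← hl, Fin.sum_univ_succ]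
    simp only [Finset.sum_sub_distrib]
    abel
  refine ⟨⟨?_, hNN⟩, p 0, hp 0, ?_⟩
  · simp only [cosetGen, Set.mem_iUnion]
    refine ⟨p 0, hp 0, _, ?_, hlam.symm⟩
    refine AddSubgroup.sub_mem _ (AddSubgroup.sum_mem _ fun i _ => ?_)
      (AddSubgroup.sum_mem _ fun i _ => ?_)
    · exact AddSubgroup.subset_closure ⟨_, hp _, rfl⟩
    · exact AddSubgroup.subset_closure ⟨_, hq _, rfl⟩
  · set c : (Fin d → ℤ) →₀ ℤ := ∑ i : Fin n, Finsupp.single (p i.succ) (1 : ℤ) with hc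
    set c' : (Fin d → ℤ) →₀ ℤ := ∑ i : Fin n, Finsupp.single (q i) (1 : ℤ) with hc'
    set m := (c - c').erase (p 0) with hm
    have hne : ∀ α ∈ m.support, α ≠ p 0 ∧ m α = c α - c' α := by
      intro α hα
      rw [hm, Finsupp.support_erase, Finset.mem_erase] at hα
      exact ⟨hα.1, by rw [hm, Finsupp.erase_ne hα.1, Finsupp.sub_apply]⟩
    refine ⟨m, ?_, ?_, ?_, ?_⟩
    · intro α hα
      obtain ⟨h1, h2⟩ := hne α hα
      refine ⟨?_, h1⟩
      have h3 : m α ≠ 0 := Finsupp.mem_support_iff.1 hα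
      by_cases h4 : c α = 0
      · have h5 : c' α ≠ 0 := by
          intro h5; apply h3; rw [h2, h4, h5]; rfl
        exact sum_single_mem q hq α h5
      · exact sum_single_mem _ (fun i => hp _) α h4
    · have : ∑ α ∈ m.support, m α • (α - p 0) =
          Finsupp.linearCombination ℤ (fun α : Fin d → ℤ => α - p 0) m := rfl
      rw [this, hm, Finsupp.erase_eq_sub_single, hlam, hc, hc']
      simp only [map_sub, map_sum, Finsupp.linearCombination_single, one_smul, sub_self, smul_zero,
        sub_zero]
    · refine le_trans (Finset.sum_le_sum fun α hα => ?_) (sum_ite_le (fun i : Fin n => p i.succ) m.support)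
      rw [(hne α hα).2]
      have a1 := sum_single_nonneg (fun i : Fin n => p i.succ) α
      have a2 := sum_single_nonneg q α
      rw [← hc] at *
      rw [← hc'] at a2
      exact max_le (by linarith) a1
    · refine le_trans (Finset.sum_le_sum fun α hα => ?_) (sum_ite_le q m.support)
      rw [(hne α hα).2]
      have a1 := sum_single_nonneg (fun i : Fin n => p i.succ) α
      have a2 := sum_single_nonneg q α
      rw [← hc] at a1
      rw [← hc'] at *
      exact max_le (by linarith) a2

/-! ### Characters -/

lemma torusChar_continuous {d : ℕ} (α : Fin d → ℤ) : Continuous (torusChar α) := by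
  unfold torusChar
  exact continuous_finsetProd _ fun j _ => (fourier (α j)).continuous.comp (continuous_apply j)

lemma torusChar_add {d : ℕ} (α β : Fin d → ℤ) (x : Torus d) :
    torusChar (α + β) x = torusChar α x * torusChar β x := by
  simp only [torusChar, Pi.add_apply, fourier_add, Finset.prod_mul_distrib]

lemma torusChar_neg {d : ℕ} (α : Fin d → ℤ) (x : Torus d) :
    torusChar (-α) x = (starRingEnd ℂ) (torusChar α x) := by
  simp only [torusChar, Pi.neg_apply, fourier_neg, map_prod]

lemma torusChar_zero {d : ℕ} (x : Torus d) : torusChar (0 : Fin d → ℤ) x = 1 := by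
  simp only [torusChar, Pi.zero_apply, fourier_zero, Finset.prod_const_one]

lemma torusChar_sum {d : ℕ} {ι : Type*} (s : Finset ι) (p : ι → Fin d → ℤ) (x : Torus d) :
    torusChar (∑ i ∈ s, p i) x = ∏ i ∈ s, torusChar (p i) x := by
  induction s using Finset.induction_on with
  | empty => simp [torusChar_zero]
  | insert a s ha ih => rw [Finset.sum_insert ha, Finset.prod_insert ha, torusChar_add, ih]

lemma integral_torusChar {d : ℕ} (α : Fin d → ℤ) :
    ∫ x : Torus d, torusChar α x = if α = 0 then 1 else 0 := by
  unfold torusChar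
  have := MeasureTheory.integral_fintype_prod_volume_eq_prod (𝕜 := ℂ)
    (fun (j : Fin d) (x : AddCircle (1 : ℝ)) => (fourier (α j) x : ℂ))
  rw [this]
  have hvol : (volume : Measure (AddCircle (1 : ℝ))) Set.univ = 1 := by
    rw [AddCircle.measure_univ]; simp
  split_ifs with h
  · subst h
    refine Finset.prod_eq_one fun j _ => ?_
    simp only [Pi.zero_apply, fourier_zero]
    simp [Measure.real, hvol]
  · obtain ⟨j, hj⟩ : ∃ j, α j ≠ 0 := by
      by_contra hcon
      push Not at hcon
      exact h (funext hcon)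
    refine Finset.prod_eq_zero (Finset.mem_univ j) ?_
    exact integral_eq_zero_of_add_right_eq_neg
      (fourier_add_half_inv_index hj one_pos)

lemma trigPoly_continuous {d : ℕ} (F : Finset (Fin d → ℤ)) (a : (Fin d → ℤ) → ℂ) :
    Continuous (trigPoly F a) := by
  unfold trigPoly
  exact continuous_finsetSum _ fun α _ => continuous_const.mul (torusChar_continuous α)

lemma trigPoly_pow {d : ℕ} (F : Finset (Fin d → ℤ)) (a : (Fin d → ℤ) → ℂ) (k : ℕ) (x : Torus d) :
    trigPoly F a x ^ k = ∑ p ∈ Fintype.piFinset (fun _ : Fin k => F),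
      (∏ i, a (p i)) * torusChar (∑ i, p i) x := by
  have h : trigPoly F a x ^ k = ∏ _i : Fin k, ∑ α ∈ F, a α * torusChar α x := by
    simp [trigPoly]
  rw [h, Finset.prod_univ_sum]
  refine Finset.sum_congr rfl fun p _ => ?_
  rw [Finset.prod_mul_distrib, torusChar_sum]

lemma integrable_cont {d : ℕ} {E : Type*} [NormedAddCommGroup E] {f : Torus d → E}
    (hf : Continuous f) : Integrable f := by
  exact hf.integrable_of_hasCompactSupport (HasCompactSupport.of_compactSpace f)

lemma fourier_key {d : ℕ} (F : Finset (Fin d → ℤ)) (a : (Fin d → ℤ) → ℂ) (n : ℕ)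
    (lam : Fin d → ℤ) :
    ∫ x : Torus d, ((Complex.normSq (trigPoly F a x) ^ n : ℝ) : ℂ) *
        (trigPoly F a x * (starRingEnd ℂ) (torusChar lam x)) =
      ∑ p ∈ Fintype.piFinset (fun _ : Fin (n + 1) => F),
        ∑ q ∈ Fintype.piFinset (fun _ : Fin n => F),
          (∏ i, a (p i)) * (starRingEnd ℂ) (∏ i, a (q i)) *
            (if ∑ i, p i - ∑ i, q i = lam then 1 else 0) := by
  have h : ∀ x : Torus d, ((Complex.normSq (trigPoly F a x) ^ n : ℝ) : ℂ) *
        (trigPoly F a x * (starRingEnd ℂ) (torusChar lam x)) =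
      ∑ p ∈ Fintype.piFinset (fun _ : Fin (n + 1) => F),
        ∑ q ∈ Fintype.piFinset (fun _ : Fin n => F),
          (∏ i, a (p i)) * (starRingEnd ℂ) (∏ i, a (q i)) *
            torusChar (∑ i, p i - ∑ i, q i - lam) x := by
    intro x
    have : ((Complex.normSq (trigPoly F a x) ^ n : ℝ) : ℂ) *
        (trigPoly F a x * (starRingEnd ℂ) (torusChar lam x)) =
        trigPoly F a x ^ (n + 1) * (starRingEnd ℂ) (trigPoly F a x ^ n) *
          (starRingEnd ℂ) (torusChar lam x) := by
      rw [Complex.ofReal_pow, ← Complex.mul_conj, map_pow]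
      ring
    rw [this, trigPoly_pow, trigPoly_pow, map_sum, Finset.sum_mul_sum, Finset.sum_mul]
    refine Finset.sum_congr rfl fun p _ => ?_
    rw [Finset.sum_mul]
    refine Finset.sum_congr rfl fun q _ => ?_
    rw [sub_eq_add_neg, sub_eq_add_neg, torusChar_add, torusChar_add, torusChar_neg,
      torusChar_neg, map_mul]
    ring
  simp_rw [h]
  rw [integral_finsetSum]
  · refine Finset.sum_congr rfl fun p _ => ?_
    rw [integral_finsetSum]
    · refine Finset.sum_congr rfl fun q _ => ?_
      rw [integral_const_mul, integral_torusChar]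
      simp only [sub_eq_zero]
    · intro q _
      exact integrable_cont (continuous_const.mul (torusChar_continuous _))
  · intro p _
    exact integrable_cont (continuous_finsetSum _ fun q _ =>
      continuous_const.mul (torusChar_continuous _))

/-! ### Norms -/

lemma eLpNorm_eq_aux {d : ℕ} (n : ℕ) {f : Torus d → ℂ} (hf : Continuous f) :
    eLpNorm f (2 * ((n : ℝ≥0∞) + 1)) volume =
      ENNReal.ofReal (∫ x, Complex.normSq (f x) ^ (n + 1)) ^
        (1 / (2 * ((n : ℝ≥0∞) + 1)).toReal) := by
  have hp : (2 * ((n : ℝ≥0∞) + 1)).toReal = ((2 * (n + 1) : ℕ) : ℝ) := by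
    rw [show (2 * ((n : ℝ≥0∞) + 1)) = ((2 * (n + 1) : ℕ) : ℝ≥0∞) by push_cast; rfl]
    exact ENNReal.toReal_natCast _
  rw [eLpNorm_eq_lintegral_rpow_enorm_toReal (by simp) (by finiteness),
    ofReal_integral_eq_lintegral_ofReal (f := fun x => Complex.normSq (f x) ^ (n + 1))
      (integrable_cont ((Complex.continuous_normSq.comp hf).pow _))
      (Filter.Eventually.of_forall fun x => pow_nonneg (Complex.normSq_nonneg _) _)]
  congr 1
  refine lintegral_congr fun x => ?_
  rw [hp, ENNReal.rpow_natCast, Complex.normSq_eq_norm_sq, ← pow_mul, ← ofReal_norm,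
    ENNReal.ofReal_pow (norm_nonneg _)]

lemma eLpNorm_le_iff {d : ℕ} (n : ℕ) {f g : Torus d → ℂ} (hf : Continuous f) (hg : Continuous g) :
    eLpNorm f (2 * ((n : ℝ≥0∞) + 1)) volume ≤ eLpNorm g (2 * ((n : ℝ≥0∞) + 1)) volume ↔
      ∫ x, Complex.normSq (f x) ^ (n + 1) ≤ ∫ x, Complex.normSq (g x) ^ (n + 1) := by
  have hpos : 0 < (2 * ((n : ℝ≥0∞) + 1)).toReal :=
    ENNReal.toReal_pos (by simp) (by finiteness)
  rw [eLpNorm_eq_aux n hf, eLpNorm_eq_aux n hg, ENNReal.rpow_le_rpow_iff (by positivity),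
    ENNReal.ofReal_le_ofReal_iff]
  exact integral_nonneg fun x => pow_nonneg (Complex.normSq_nonneg _) _

lemma pow_convex_aux (n : ℕ) (a b : ℝ) (ha : 0 ≤ a) (hb : 0 ≤ b) :
    a ^ (n + 1) + (n + 1) * (a ^ n * (b - a)) ≤ b ^ (n + 1) := by
  induction n with
  | zero => simp
  | succ k ih =>
    have h1 := mul_le_mul_of_nonneg_left ih hb
    have h2 : 0 ≤ (k + 1 : ℝ) * (a ^ k * (b - a) ^ 2) := by positivity
    push_cast
    ring_nf at h1 h2 ⊢
    nlinarith

lemma normSq_add_aux (z w : ℂ) : Complex.normSq (z + w) =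
    Complex.normSq z + 2 * (z * (starRingEnd ℂ) w).re + Complex.normSq w := by
  rw [Complex.normSq_add]; ring

lemma contractive_of_Eext {d n : ℕ} {Γ : Set (Fin d → ℤ)} (h : Eext n Γ = Γ) :
    IsContractiveHp d (2 * ((n : ℝ≥0∞) + 1)) Γ := by
  intro F hF a
  rw [eLpNorm_le_iff n (trigPoly_continuous _ _) (trigPoly_continuous _ _)]
  set g := trigPoly (F.filter (· ∈ Γ)) a with hg
  set r := trigPoly (F.filter (¬ · ∈ Γ)) a with hr
  have hgc : Continuous g := trigPoly_continuous _ _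
  have hrc : Continuous r := trigPoly_continuous _ _
  have hf : ∀ x, trigPoly F a x = g x + r x := fun x =>
    (Finset.sum_filter_add_sum_filter_not F (· ∈ Γ) _).symm
  have hzero : ∫ x : Torus d, ((Complex.normSq (g x) ^ n : ℝ) : ℂ) *
      (g x * (starRingEnd ℂ) (r x)) = 0 := by
    have e : ∀ x : Torus d, ((Complex.normSq (g x) ^ n : ℝ) : ℂ) *
      (g x * (starRingEnd ℂ) (r x)) = ∑ lam ∈ F.filter (¬ · ∈ Γ), (starRingEnd ℂ) (a lam) *
        (((Complex.normSq (g x) ^ n : ℝ) : ℂ) *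
          (g x * (starRingEnd ℂ) (torusChar lam x))) := by
      intro x
      rw [hr, trigPoly, map_sum, Finset.mul_sum, Finset.mul_sum]
      refine Finset.sum_congr rfl fun lam _ => ?_
      rw [map_mul]; ring
    simp_rw [e]
    rw [integral_finsetSum]
    · refine Finset.sum_eq_zero fun lam hlam => ?_
      rw [Finset.mem_filter] at hlam
      rw [integral_const_mul, hg, fourier_key]
      rw [Finset.sum_eq_zero, mul_zero]
      intro p hp
      refine Finset.sum_eq_zero fun q hq => ?_
      rw [Fintype.mem_piFinset] at hp hq
      rw [if_neg, mul_zero]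
      intro heq
      apply hlam.2
      rw [← h]
      exact mem_Eext_of_sum p q (fun i => (Finset.mem_filter.1 (hp i)).2)
        (fun i => (Finset.mem_filter.1 (hq i)).2) heq (hF hlam.1)
    · intro lam _
      have := torusChar_continuous lam
      refine integrable_cont ?_
      have h2 := Complex.continuous_normSq.comp hgc
      exact continuous_const.mul ((Complex.continuous_ofReal.comp (h2.pow n)).mul
        (hgc.mul (Complex.continuous_conj.comp this)))
  have hcc : Continuous fun x : Torus d => ((Complex.normSq (g x) ^ n : ℝ) : ℂ) *
      (g x * (starRingEnd ℂ) (r x)) :=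
    (Complex.continuous_ofReal.comp ((Complex.continuous_normSq.comp hgc).pow n)).mul
        (hgc.mul (Complex.continuous_conj.comp hrc))
  have hre : ∫ x : Torus d, (((Complex.normSq (g x) ^ n : ℝ) : ℂ) *
      (g x * (starRingEnd ℂ) (r x))).re = 0 := by
    have := Complex.reCLM.integral_comp_comm (integrable_cont hcc)
    simp only [Complex.reCLM_apply] at this
    rw [this, hzero]; rfl
  calc ∫ x, Complex.normSq (g x) ^ (n + 1)
      = ∫ x, (Complex.normSq (g x) ^ (n + 1) + (2 * (n + 1)) *
          (((Complex.normSq (g x) ^ n : ℝ) : ℂ) * (g x * (starRingEnd ℂ) (r x))).re) := by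
        rw [integral_add, integral_const_mul, hre, mul_zero, add_zero]
        · exact integrable_cont ((Complex.continuous_normSq.comp hgc).pow _)
        · exact (integrable_cont (Complex.continuous_re.comp hcc)).const_mul _
    _ ≤ _ := by
        refine integral_mono ?_ ?_ fun x => ?_
        · exact (integrable_cont ((Complex.continuous_normSq.comp hgc).pow _)).add
            ((integrable_cont (Complex.continuous_re.comp hcc)).const_mul _)
        · exact integrable_cont ((Complex.continuous_normSq.comp (trigPoly_continuous _ _)).pow _)
        · dsimp only
          rw [hf, Complex.re_ofReal_mul]
          refine le_trans ?_ (pow_convex_aux n _ _ (Complex.normSq_nonneg (g x))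
            (Complex.normSq_nonneg _))
          rw [normSq_add_aux]
          have h1 : 0 ≤ (n + 1 : ℝ) * (Complex.normSq (g x) ^ n * Complex.normSq (r x)) :=
            mul_nonneg (by positivity) (mul_nonneg (pow_nonneg (Complex.normSq_nonneg _) _)
              (Complex.normSq_nonneg _))
          nlinarith

lemma perturb_aux {d : ℕ} (n : ℕ) (g χ : Torus d → ℂ) (hgc : Continuous g) (hχ : Continuous χ)
    (hmin : ∀ ε : ℝ, ∫ x, Complex.normSq (g x) ^ (n + 1) ≤
      ∫ x, Complex.normSq (g x + ε * χ x) ^ (n + 1)) :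
    (∫ x : Torus d, ((Complex.normSq (g x) ^ n : ℝ) : ℂ) *
      (g x * (starRingEnd ℂ) (χ x))).re ≤ 0 := by
  set B : Torus d → ℝ := fun x => 2 * (g x * (starRingEnd ℂ) (χ x)).re with hB
  have hBc : Continuous B := continuous_const.mul
    (Complex.continuous_re.comp (hgc.mul (Complex.continuous_conj.comp hχ)))
  have hexp : ∀ (ε : ℝ) x, Complex.normSq (g x + ε * χ x) =
      Complex.normSq (g x) + ε * (B x + ε * Complex.normSq (χ x)) := by
    intro ε x
    rw [normSq_add_aux, map_mul, map_mul, Complex.conj_ofReal, Complex.normSq_ofReal,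
      mul_left_comm, Complex.re_ofReal_mul]
    simp only [hB]
    ring
  let Φ : ℝ → Torus d → ℝ := fun ε x => Complex.normSq (g x + ε * χ x) ^ n *
    (B x + ε * Complex.normSq (χ x))
  have hΦc : Continuous (Function.uncurry Φ) := by
    have a1 : Continuous fun y : ℝ × Torus d => g y.2 := hgc.comp continuous_snd
    have a2 : Continuous fun y : ℝ × Torus d => χ y.2 := hχ.comp continuous_snd
    have a3 : Continuous fun y : ℝ × Torus d => B y.2 := hBc.comp continuous_snd
    have a4 : Continuous fun y : ℝ × Torus d => (y.1 : ℂ) :=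
      Complex.continuous_ofReal.comp continuous_fst
    exact ((Complex.continuous_normSq.comp (a1.add (a4.mul a2))).pow n).mul
      (a3.add (continuous_fst.mul (Complex.continuous_normSq.comp a2)))
  have hcont : Continuous fun ε : ℝ => ∫ x, Φ ε x := by
    have := continuous_parametric_integral_of_continuous (μ := (volume : Measure (Torus d)))
      hΦc isCompact_univ
    simpa using this
  have hΦx : ∀ ε, Continuous (Φ ε) := fun ε =>
    hΦc.comp (continuous_const.prodMk continuous_id)
  have hneg : ∀ ε < (0 : ℝ), ∫ x, Φ ε x ≤ 0 := by
    intro ε hε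
    have h1 := hmin ε
    have hc1 : Continuous fun x : Torus d => Complex.normSq (g x) ^ (n + 1) :=
      (Complex.continuous_normSq.comp hgc).pow _
    have hc2 : Continuous fun x : Torus d =>
        Complex.normSq (g x + ε * χ x) ^ (n + 1) :=
      (Complex.continuous_normSq.comp (hgc.add (continuous_const.mul hχ))).pow _
    have h2 : ∫ x, Complex.normSq (g x + ε * χ x) ^ (n + 1) ≤
        ∫ x, (Complex.normSq (g x) ^ (n + 1) + ((n + 1) * ε) * Φ ε x) := by
      refine integral_mono (integrable_cont hc2)
        ((integrable_cont hc1).add ((integrable_cont (hΦx ε)).const_mul _)) fun x => ?_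
      have := pow_convex_aux n _ _ (Complex.normSq_nonneg (g x + ε * χ x))
        (Complex.normSq_nonneg (g x))
      have h3 : Complex.normSq (g x) - Complex.normSq (g x + ε * χ x) =
        -(ε * (B x + ε * Complex.normSq (χ x))) := by rw [hexp]; ring
      rw [h3] at this
      simp only [Φ]
      nlinarith
    rw [integral_add (integrable_cont hc1) ((integrable_cont (hΦx ε)).const_mul _),
      integral_const_mul] at h2
    have h4 : 0 ≤ ((n + 1 : ℝ) * ε) * ∫ x, Φ ε x := by linarith
    have h5 : (n + 1 : ℝ) * ε < 0 := mul_neg_of_pos_of_neg (by positivity) hε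
    by_contra hcon
    push Not at hcon
    nlinarith [mul_neg_of_neg_of_pos h5 hcon]
  have hle : ∫ x, Φ 0 x ≤ 0 := by
    have ht : Filter.Tendsto (fun ε : ℝ => ∫ x, Φ ε x) (nhdsWithin 0 (Set.Iio 0))
        (nhds (∫ x, Φ 0 x)) := (hcont.tendsto 0).mono_left nhdsWithin_le_nhds
    refine le_of_tendsto ht ?_
    filter_upwards [self_mem_nhdsWithin] with ε hε using hneg ε hε
  have hval : ∫ x, Φ 0 x = 2 * (∫ x : Torus d, ((Complex.normSq (g x) ^ n : ℝ) : ℂ) *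
      (g x * (starRingEnd ℂ) (χ x))).re := by
    have hcc : Continuous fun x : Torus d => ((Complex.normSq (g x) ^ n : ℝ) : ℂ) *
        (g x * (starRingEnd ℂ) (χ x)) :=
      (Complex.continuous_ofReal.comp ((Complex.continuous_normSq.comp hgc).pow n)).mul
        (hgc.mul (Complex.continuous_conj.comp hχ))
    have := Complex.reCLM.integral_comp_comm (integrable_cont hcc)
    simp only [Complex.reCLM_apply] at this
    rw [← this, ← integral_const_mul]
    refine integral_congr_ae (Filter.Eventually.of_forall fun x => ?_)
    simp only [Φ, hB, Complex.re_ofReal_mul, Complex.ofReal_zero, zero_mul, add_zero]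
    ring
  linarith

lemma Eext_subset_of_contractive {d n : ℕ} {Γ : Set (Fin d → ℤ)} (hΓ : Γ ⊆ NN d)
    (h : IsContractiveHp d (2 * ((n : ℝ≥0∞) + 1)) Γ) : Eext n Γ ⊆ Γ := by
  intro lam hlam
  by_contra hnot
  obtain ⟨p, q, hp, hq, hpq⟩ := exists_of_mem_Eext hlam
  have hNN : lam ∈ NN d := hlam.1.2
  set S : Finset (Fin d → ℤ) := Finset.univ.image p ∪ Finset.univ.image q with hS
  have hSΓ : ∀ α ∈ S, α ∈ Γ := by
    intro α hα
    simp only [hS, Finset.mem_union, Finset.mem_image, Finset.mem_univ, true_and] at hα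
    rcases hα with ⟨i, rfl⟩ | ⟨i, rfl⟩
    · exact hp i
    · exact hq i
  have hlS : lam ∉ S := fun hc => hnot (hSΓ _ hc)
  set g : Torus d → ℂ := trigPoly S (fun _ => 1) with hg
  have hgc : Continuous g := trigPoly_continuous _ _
  have hχ := torusChar_continuous lam
  -- perturbation
  have hmin : ∀ ε : ℝ, ∫ x, Complex.normSq (g x) ^ (n + 1) ≤
      ∫ x, Complex.normSq (g x + ε * torusChar lam x) ^ (n + 1) := by
    intro ε
    have h1 := h (insert lam S) (by
      intro α hα
      rw [Finset.coe_insert] at hα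
      rcases hα with rfl | hα
      · exact hNN
      · exact hΓ (hSΓ _ hα)) (fun α => if α = lam then (ε : ℂ) else 1)
    rw [eLpNorm_le_iff n (trigPoly_continuous _ _) (trigPoly_continuous _ _)] at h1
    have e0 : ∀ x, trigPoly S (fun α => if α = lam then (ε : ℂ) else 1) x = g x := by
      intro x
      refine Finset.sum_congr rfl fun α hα => ?_
      have : α ≠ lam := fun hc => hlS (hc ▸ hα)
      simp only [this, if_false]
    have e1 : (insert lam S).filter (· ∈ Γ) = S := by
      rw [Finset.filter_insert, if_neg hnot, Finset.filter_true_of_mem hSΓ]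
    have e2 : ∀ x, trigPoly (insert lam S) (fun α => if α = lam then (ε : ℂ) else 1) x =
        g x + ε * torusChar lam x := by
      intro x
      rw [← e0 x, trigPoly, Finset.sum_insert hlS, add_comm]
      simp only [if_true]
      rfl
    rw [e1] at h1
    simp_rw [e0, e2] at h1
    exact h1
  have hle := perturb_aux n g _ hgc hχ hmin
  rw [hg, fourier_key] at hle
  simp only [Finset.prod_const_one, map_one, one_mul, Complex.re_sum] at hle
  have hterm : ∀ (p : Fin (n + 1) → Fin d → ℤ) (q : Fin n → Fin d → ℤ),
      0 ≤ (if ∑ i, p i - ∑ i, q i = lam then (1 : ℂ) else 0).re := by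
    intro p q; split_ifs <;> simp
  have hpS : p ∈ Fintype.piFinset (fun _ : Fin (n + 1) => S) := by
    rw [Fintype.mem_piFinset]; intro i; simp [hS]
  have hqS : q ∈ Fintype.piFinset (fun _ : Fin n => S) := by
    rw [Fintype.mem_piFinset]; intro i; simp [hS]
  have hs1 := Finset.single_le_sum (f := fun p => ∑ q ∈ Fintype.piFinset (fun _ : Fin n => S),
    (if ∑ i, p i - ∑ i, q i = lam then (1 : ℂ) else 0).re)
    (fun p _ => Finset.sum_nonneg fun q _ => hterm p q) hpS
  have hs2 := Finset.single_le_sum (f := fun q =>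
    (if ∑ i, p i - ∑ i, q i = lam then (1 : ℂ) else 0).re)
    (fun q _ => hterm p q) hqS
  simp only [hpq, if_true, Complex.one_re] at hs2
  linarith

/-- Theorem 3: `Γ ⊆ ℕ₀^d` is a contractive projection set for `H^{2(n+1)}(𝕋^d)`
iff `E_n(Γ) = Γ`. -/
theorem contractive_iff_n_extension (d : ℕ) (hd : 1 ≤ d) (n : ℕ)
    (Γ : Set (Fin d → ℤ)) (hne : Γ.Nonempty) (hΓ : Γ ⊆ NN d) :
    IsContractiveHp d (2 * ((n : ℝ≥0∞) + 1)) Γ ↔ Eext n Γ = Γ := by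
  refine ⟨fun h => Set.Subset.antisymm (Eext_subset_of_contractive hΓ h) fun γ hγ => ?_,
    contractive_of_Eext⟩
  refine mem_Eext_of_sum (fun _ => γ) (fun _ => γ) (fun _ => hγ) (fun _ => hγ) ?_ (hΓ hγ)
  simp [Finset.sum_const, add_smul]

end
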